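/- arXiv:1203.1720 — 2 statements merged into one kernel-verified Lean document; each statement's English description precedes it below -/
import Mathlib

section
/- Let Δ be a homology (d−1)-sphere over a field k and 1 ≤ r ≤ (d+1)/2 an integer. If Δ' is an (r−1)-stacked homology d-ball over k with ∂Δ' = Δ, then Δ' = Δ(d−r). In particular, an (r−1)-stacked homology d-ball with given boundary Δ is unique. -/
open Finset

variable {V : Type*} [DecidableEq V] [Fintype V]

/-- A (possibly empty) simplicial complex on the vertex set `V`,
given as its set of faces: a collection of finite subsets of `V`
closed under taking subsets. -/
def IsComplex (Δ : Set (Finset V)) : Prop :=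
  ∀ F ∈ Δ, ∀ G ⊆ F, G ∈ Δ

/-- `skc Δ i` is the complex `Δ(i) = {F ⊆ V : skelᵢ(2^F) ⊆ Δ}`:
all subsets `F` of `V` all of whose subsets of cardinality at most `i+1`
are faces of `Δ`. -/
def skc (Δ : Set (Finset V)) (i : ℕ) : Set (Finset V) :=
  {F | ∀ G ⊆ F, G.card ≤ i + 1 → G ∈ Δ}

/-- The `k`-skeleton of a complex: faces of cardinality at most `k+1`. -/
def skel (Δ : Set (Finset V)) (k : ℕ) : Set (Finset V) :=
  {F ∈ Δ | F.card ≤ k + 1}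

/-- A missing face of `Δ`: a non-face all of whose proper subsets are faces. -/
def IsMissingFace (Δ : Set (Finset V)) (F : Finset V) : Prop :=
  F ∉ Δ ∧ ∀ G ⊂ F, G ∈ Δ

/-- The link of a face. -/
def link (Δ : Set (Finset V)) (F : Finset V) : Set (Finset V) :=
  {G | Disjoint F G ∧ F ∪ G ∈ Δ}

/-- `numFacesCard Δ j` is `f_{j-1}(Δ)`, the number of faces of `Δ` of
cardinality `j`. -/
noncomputable def numFacesCard (Δ : Set (Finset V)) (j : ℕ) : ℕ :=
  {F : Finset V | F ∈ Δ ∧ F.card = j}.ncard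

/-- The `h`-numbers of a `(d-1)`-dimensional complex:
`h_i = ∑_{j=0}^{i} (-1)^{i-j} C(d-j, i-j) f_{j-1}`. -/
noncomputable def hVec (Δ : Set (Finset V)) (d i : ℕ) : ℤ :=
  ∑ j ∈ Finset.range (i + 1),
    (-1 : ℤ) ^ (i - j) * ((d - j).choose (i - j)) * (numFacesCard Δ j)

/- ### Reduced simplicial homology over a field -/

section Homology

variable (𝕜 : Type*) [Field 𝕜] [LinearOrder V]

/-- Simplicial chains supported on a given set of finite subsets of `V`. -/
def chainsOn (A : Set (Finset V)) : Submodule 𝕜 (Finset V → 𝕜) where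
  carrier := {f | ∀ G, f G ≠ 0 → G ∈ A}
  zero_mem' := by intro G hG; simp at hG
  add_mem' := by
    intro f g hf hg G hG
    by_cases h : f G = 0
    · exact hg G (by simpa [h] using hG)
    · exact hf G h
  smul_mem' := by
    intro c f hf G hG
    exact hf G (by intro h; simp [h] at hG)

/-- The boundary operator of the (augmented) simplicial chain complex on the
full simplex on `V`: `∂(e_F) = ∑_{v ∈ F} (-1)^{pos of v in F} e_{F \ v}`,
written in the dual form `(∂ f) G = ∑_{v ∉ G} (-1)^{#{u ∈ G : u < v}} f (G ∪ {v})`.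
The augmentation is included (singletons map onto the empty-set generator),
so the homology computed below is reduced homology. -/
noncomputable def bdryMap : (Finset V → 𝕜) →ₗ[𝕜] (Finset V → 𝕜) where
  toFun f := fun G => ∑ v ∈ Gᶜ,
    ((-1 : 𝕜) ^ ((G.filter (fun u => u < v)).card)) * f (insert v G)
  map_add' f g := by
    funext G
    simp [mul_add, Finset.sum_add_distrib]
  map_smul' c f := by
    funext G
    simp [Finset.mul_sum]
    congr 1; funext v; ring

/-- Reduced cycles of `Δ` in cardinality `c` (i.e. dimension `c-1`). -/
noncomputable def redCycles (Δ : Set (Finset V)) (c : ℕ) :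
    Submodule 𝕜 (Finset V → 𝕜) :=
  (chainsOn 𝕜 {F | F ∈ Δ ∧ F.card = c}) ⊓ LinearMap.ker (bdryMap 𝕜)

/-- Reduced boundaries of `Δ` in cardinality `c`. -/
noncomputable def redBdries (Δ : Set (Finset V)) (c : ℕ) :
    Submodule 𝕜 (Finset V → 𝕜) :=
  Submodule.map (bdryMap 𝕜) (chainsOn 𝕜 {F | F ∈ Δ ∧ F.card = c + 1})

/-- `redH 𝕜 Δ c` is the reduced simplicial homology `H̃_{c-1}(Δ; 𝕜)`
(indexed by the cardinality `c` of faces rather than the dimension `c-1`). -/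
noncomputable def redH (Δ : Set (Finset V)) (c : ℕ) : Type _ :=
  ↥(redCycles 𝕜 Δ c) ⧸
    Submodule.comap (redCycles 𝕜 Δ c).subtype (redBdries 𝕜 Δ c)

noncomputable instance (Δ : Set (Finset V)) (c : ℕ) :
    AddCommGroup (redH 𝕜 Δ c) := by
  unfold redH; infer_instance

noncomputable instance (Δ : Set (Finset V)) (c : ℕ) :
    Module 𝕜 (redH 𝕜 Δ c) := by
  unfold redH; infer_instance

/-- `Δ` is a homology `n`-sphere over `𝕜`: it is an `n`-dimensional complex
such that for every face `F` (including `∅`) the reduced homology of the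
link of `F` is that of a sphere of dimension `n - #F`, i.e.
`H̃_{c-1}(lk F) = 𝕜` if `c = n + 1 - #F` and `0` otherwise. -/
def IsHomologySphere (Δ : Set (Finset V)) (n : ℕ) : Prop :=
  IsComplex Δ ∧ (∀ F ∈ Δ, F.card ≤ n + 1) ∧ (∃ F ∈ Δ, F.card = n + 1) ∧
  ∀ F ∈ Δ, ∀ c : ℕ,
    Module.finrank 𝕜 (redH 𝕜 (link Δ F) c) =
      if c + F.card = n + 1 then 1 else 0

/-- The boundary faces of a `d`-dimensional homology ball:
those faces `F` whose link has vanishing top reduced homology. -/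
def bdryFaces (Δ : Set (Finset V)) (d : ℕ) : Set (Finset V) :=
  {F | F ∈ Δ ∧
    Module.finrank 𝕜 (redH 𝕜 (link Δ F) (d + 1 - F.card)) = 0}

/-- `Δ` is a homology `d`-ball over `𝕜`: a `d`-dimensional complex all of
whose links have reduced homology vanishing except possibly in the top
dimension `d - #F`, where it is `𝕜` or `0`, and whose boundary complex is
a homology `(d-1)`-sphere. -/
def IsHomologyBall (Δ : Set (Finset V)) (d : ℕ) : Prop :=
  IsComplex Δ ∧ (∀ F ∈ Δ, F.card ≤ d + 1) ∧ (∃ F ∈ Δ, F.card = d + 1) ∧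
  (∀ F ∈ Δ, ∀ c : ℕ,
    (c + F.card = d + 1 → Module.finrank 𝕜 (redH 𝕜 (link Δ F) c) ≤ 1) ∧
    (c + F.card ≠ d + 1 → Module.finrank 𝕜 (redH 𝕜 (link Δ F) c) = 0)) ∧
  IsHomologySphere 𝕜 (bdryFaces 𝕜 Δ d) (d - 1)

/-- A homology `d`-ball is `(r-1)`-stacked if it has no interior faces of
dimension at most `d - r`, i.e. every interior face has cardinality at
least `d - r + 2`. -/
def IsStackedBall (Δ : Set (Finset V)) (d r : ℕ) : Prop :=
  IsHomologyBall 𝕜 Δ d ∧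
  ∀ F ∈ Δ, F ∉ bdryFaces 𝕜 Δ d → d - r + 2 ≤ F.card

end Homology

/-!
By Reisner's criterion a homology ball is Cohen–Macaulay: its links have homology only in the top
dimension, and a boundary face is one whose link has no homology at all. Take `i = d - r`. If every
face with at most `i + 1` vertices lies on the boundary and `d ≤ 2 * i + 1`, then links have no
homology in dimension `i` or above: in such a dimension only faces with at most `d - i ≤ i + 1`
vertices could contribute, and these are boundary faces. So the ball is `i`-Leray. The Leray
property passes to induced subcomplexes, because deleting a vertex `w` is controlled by the
chain-level identity `(∂ y) \ w = ∂ (y \ w) + lk_w y`. Since a missing face of dimension `m` spans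
an induced `(m - 1)`-sphere, missing faces have dimension at most `i`. Hence the ball is determined
by its `i`-skeleton, which is also the `i`-skeleton of its boundary.
-/

section Combinatorics

variable {V : Type*}

theorem skc_eq_skc_of_skel_eq {D E : Set (Finset V)} {i : ℕ} (h : skel D i = skel E i) :
    skc D i = skc E i := by
  have mem_iff (G : Finset V) (hG : G.card ≤ i + 1) : G ∈ D ↔ G ∈ E :=
    ⟨fun hGD => (h.subset ⟨hGD, hG⟩).1, fun hGE => (h.superset ⟨hGE, hG⟩).1⟩
  ext F
  exact forall₃_congr fun G _ hG => mem_iff G hG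

theorem IsComplex.subset_skc {D : Set (Finset V)} (hD : IsComplex D) (i : ℕ) : D ⊆ skc D i :=
  fun F hF G hGF _ => hD F hF G hGF

theorem exists_subset_isMissingFace {D : Set (Finset V)} {F : Finset V} (hF : F ∉ D) :
    ∃ G ⊆ F, IsMissingFace D G := by
  induction F using Finset.strongInduction with
  | H F ih =>
    by_cases h : ∀ G ⊂ F, G ∈ D
    · exact ⟨F, Subset.rfl, hF, h⟩
    · push Not at h
      obtain ⟨G, hGF, hG⟩ := h
      obtain ⟨H, hHG, hH⟩ := ih G hGF hG
      exact ⟨H, hHG.trans hGF.subset, hH⟩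

theorem IsComplex.skc_eq_self {D : Set (Finset V)} {i : ℕ} (hD : IsComplex D)
    (hmissing : ∀ F, IsMissingFace D F → F.card ≤ i + 1) : skc D i = D := by
  refine Set.Subset.antisymm (fun F hF => ?_) (hD.subset_skc i)
  by_contra hFD
  obtain ⟨G, hGF, hG⟩ := exists_subset_isMissingFace hFD
  exact hG.1 (hF G hGF (hmissing G hG))

/-- The deletion `D \ U`: the subcomplex of `D` induced on the complement of the vertex set `U`. -/
def deletion (D : Set (Finset V)) (U : Finset V) : Set (Finset V) :=
  {G | G ∈ D ∧ Disjoint U G}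

theorem isComplex_deletion {D : Set (Finset V)} (hD : IsComplex D) (U : Finset V) :
    IsComplex (deletion D U) :=
  fun F hF G hGF => ⟨hD F hF.1 G hGF, hF.2.mono_right hGF⟩

theorem deletion_empty (D : Set (Finset V)) : deletion D ∅ = D := by
  ext G
  simp [deletion]

variable [DecidableEq V]

theorem deletion_insert (D : Set (Finset V)) (w : V) (U : Finset V) :
    deletion D (insert w U) = deletion (deletion D U) {w} := by
  ext G
  simp only [deletion, Set.mem_ofPred_eq, disjoint_insert_left, disjoint_singleton_left]
  tauto

theorem isComplex_link {D : Set (Finset V)} (hD : IsComplex D) (F : Finset V) :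
    IsComplex (link D F) :=
  fun _ hG _ hHG => ⟨hG.1.mono_right hHG, hD _ hG.2 _ (union_subset_union_right hHG)⟩

theorem link_empty (D : Set (Finset V)) : link D ∅ = D := by
  ext G
  simp [link]

theorem IsComplex.link_eq_empty {D : Set (Finset V)} (hD : IsComplex D) {F : Finset V}
    (hF : F ∉ D) : link D F = ∅ :=
  Set.eq_empty_of_forall_notMem fun _ hG => hF (hD _ hG.2 _ subset_union_left)

theorem link_link (D : Set (Finset V)) {A B : Finset V} (hAB : Disjoint A B) :
    link (link D A) B = link D (A ∪ B) := by
  ext G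
  simp only [link, Set.mem_ofPred_eq, disjoint_union_left, disjoint_union_right, union_assoc]
  tauto

theorem link_deletion (D : Set (Finset V)) {U F : Finset V} (hUF : Disjoint U F) :
    link (deletion D U) F = deletion (link D F) U := by
  ext G
  simp only [link, deletion, Set.mem_ofPred_eq, disjoint_union_right]
  tauto

theorem IsComplex.link_subset_deletion {D : Set (Finset V)} (hD : IsComplex D) (F : Finset V) :
    link D F ⊆ deletion D F :=
  fun _ hG => ⟨hD _ hG.2 _ subset_union_right, hG.1⟩

end Combinatorics

section IncidenceSign

variable {V : Type*} [LinearOrder V] (R : Type*) [Ring R]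

/-- The incidence number `[insert v G : G]` of the simplicial chain complex, for `v ∉ G`. -/
def incidenceSign (G : Finset V) (v : V) : R :=
  (-1) ^ (G.filter (· < v)).card

theorem incidenceSign_ne_zero [Nontrivial R] (G : Finset V) (v : V) : incidenceSign R G v ≠ 0 :=
  ((isUnit_one.neg).pow _).ne_zero

theorem incidenceSign_insert {G : Finset V} {v : V} (hv : v ∉ G) (w : V) :
    incidenceSign R (insert v G) w =
      if v < w then -incidenceSign R G w else incidenceSign R G w := by
  unfold incidenceSign
  split_ifs with h
  · rw [filter_insert, if_pos h, card_insert_of_notMem (by simp [hv]), pow_succ, mul_neg_one]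
  · rw [filter_insert, if_neg h]

theorem incidenceSign_mul_incidenceSign_insert {G : Finset V} {v w : V} (hv : v ∉ G) (hw : w ∉ G)
    (hvw : v ≠ w) :
    incidenceSign R G v * incidenceSign R (insert v G) w =
      -(incidenceSign R G w * incidenceSign R (insert w G) v) := by
  have hcomm : Commute (incidenceSign R G v) (incidenceSign R G w) :=
    (Commute.refl (-1 : R)).pow_pow _ _
  rw [incidenceSign_insert R hv, incidenceSign_insert R hw]
  rcases hvw.lt_or_gt with h | h <;> simp [h, h.not_gt, hcomm.eq]

end IncidenceSign

section Chains

variable {V : Type*} [LinearOrder V] {𝕜 : Type*} [Field 𝕜]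

/-- The link part `lk_w f` of a chain `f`: writing `f = g + w * h` with `g` and `h` supported on
faces avoiding `w`, this is `h` (up to the orientation of the join). -/
noncomputable def linkPart (w : V) (f : Finset V → 𝕜) : Finset V → 𝕜 :=
  {G | w ∉ G}.indicator fun G => incidenceSign 𝕜 G w * f (insert w G)

theorem linkPart_mem_chainsOn {A : Set (Finset V)} {f : Finset V → 𝕜} (hf : f ∈ chainsOn 𝕜 A)
    (w : V) : linkPart w f ∈ chainsOn 𝕜 {G | w ∉ G ∧ insert w G ∈ A} := by
  intro G hG
  obtain ⟨hw, hne⟩ := Set.indicator_apply_ne_zero.1 hG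
  exact ⟨hw, hf _ (right_ne_zero_of_mul hne)⟩

variable [Fintype V]

theorem bdryMap_apply (f : Finset V → 𝕜) (G : Finset V) :
    bdryMap 𝕜 f G = ∑ v ∈ Gᶜ, incidenceSign 𝕜 G v * f (insert v G) :=
  rfl

theorem bdryMap_bdryMap (f : Finset V → 𝕜) : bdryMap 𝕜 (bdryMap 𝕜 f) = 0 := by
  funext G
  simp only [bdryMap_apply, mul_sum, sum_sigma', Pi.zero_apply]
  refine sum_involution (fun p _ => ⟨p.2, p.1⟩) ?_ ?_ ?_ fun _ _ => rfl
  all_goals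
    rintro ⟨v, w⟩ hvw
    simp only [mem_sigma, mem_compl, mem_insert, not_or] at hvw ⊢
    obtain ⟨hv, hne, hw⟩ := hvw
  · rw [insert_comm v w G, ← mul_assoc, ← mul_assoc,
      incidenceSign_mul_incidenceSign_insert 𝕜 hv hw (Ne.symm hne)]
    ring
  · exact fun _ heq => hne (congrArg Sigma.fst heq)
  · exact ⟨hw, Ne.symm hne, hv⟩

theorem bdryMap_mem_chainsOn {A : Set (Finset V)} {f : Finset V → 𝕜} (hf : f ∈ chainsOn 𝕜 A) :
    bdryMap 𝕜 f ∈ chainsOn 𝕜 {G | ∃ v ∉ G, insert v G ∈ A} := by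
  intro G hG
  obtain ⟨v, hv, hne⟩ := exists_ne_zero_of_sum_ne_zero hG
  exact ⟨v, mem_compl.1 hv, hf _ (right_ne_zero_of_mul hne)⟩

variable (𝕜) in
theorem bdryMap_single_apply_erase {F : Finset V} {v : V} (hv : v ∈ F) :
    bdryMap 𝕜 (Pi.single F 1) (F.erase v) = incidenceSign 𝕜 (F.erase v) v := by
  rw [bdryMap_apply, sum_eq_single v]
  · simp [insert_erase hv]
  · intro u _ huv
    have hne : insert u (F.erase v) ≠ F := fun h => by
      simpa [huv.symm] using h.superset hv
    simp [hne]
  · simp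

theorem indicator_bdryMap (w : V) (f : Finset V → 𝕜) :
    {G | w ∉ G}.indicator (bdryMap 𝕜 f) =
      bdryMap 𝕜 ({G | w ∉ G}.indicator f) + linkPart w f := by
  funext G
  by_cases hw : w ∈ G
  · simp [linkPart, bdryMap_apply, hw]
  · have hwc : w ∈ Gᶜ := mem_compl.2 hw
    have herase : ∀ v ∈ Gᶜ.erase w, w ∉ insert v G := fun v hv => by
      simp [hw, (ne_of_mem_erase hv).symm]
    rw [Pi.add_apply, Set.indicator_of_mem (show G ∈ {G | w ∉ G} from hw), bdryMap_apply,
      bdryMap_apply, ← sum_erase_add _ _ hwc, ← sum_erase_add _ _ hwc]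
    simp +contextual [linkPart, hw, herase]

theorem bdryMap_linkPart (w : V) (f : Finset V → 𝕜) :
    bdryMap 𝕜 (linkPart w f) = -linkPart w (bdryMap 𝕜 f) := by
  have bdry_indicator := congrArg (bdryMap 𝕜) (indicator_bdryMap w f)
  have indicator_bdry := indicator_bdryMap w (bdryMap 𝕜 f)
  rw [map_add, bdryMap_bdryMap, zero_add] at bdry_indicator
  rw [bdryMap_bdryMap, Set.indicator_zero'] at indicator_bdry
  rw [← bdry_indicator]
  exact eq_neg_of_add_eq_zero_left indicator_bdry.symm

end Chains

section ReducedHomology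

variable {V : Type*} [Fintype V] [LinearOrder V] {𝕜 : Type*} [Field 𝕜]

theorem finrank_redH_eq_zero_iff {D : Set (Finset V)} {c : ℕ} :
    Module.finrank 𝕜 (redH 𝕜 D c) = 0 ↔ redCycles 𝕜 D c ≤ redBdries 𝕜 D c := by
  change Module.finrank 𝕜 (redCycles 𝕜 D c ⧸
    (redBdries 𝕜 D c).comap (redCycles 𝕜 D c).subtype) = 0 ↔ _
  rw [Module.finrank_zero_iff, Submodule.Quotient.subsingleton_iff,
    Submodule.comap_subtype_eq_top]

variable (𝕜) in
theorem finrank_redH_empty (c : ℕ) :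
    Module.finrank 𝕜 (redH 𝕜 (∅ : Set (Finset V)) c) = 0 := by
  rw [finrank_redH_eq_zero_iff]
  rintro z ⟨hz, -⟩
  have hz0 : z = 0 := funext fun G => by_contra fun hG => (hz G hG).1
  exact hz0 ▸ zero_mem _

theorem finrank_redH_deletion_singleton_eq_zero {D : Set (Finset V)} {c : ℕ} {w : V}
    (hD : IsComplex D) (hH : Module.finrank 𝕜 (redH 𝕜 D c) = 0)
    (hlink : Module.finrank 𝕜 (redH 𝕜 (link D {w}) c) = 0) :
    Module.finrank 𝕜 (redH 𝕜 (deletion D {w}) c) = 0 := by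
  rw [finrank_redH_eq_zero_iff] at hH hlink ⊢
  rintro z ⟨hz, hz0⟩
  have hzw : ∀ G, w ∈ G → z G = 0 := fun G hw =>
    by_contra fun hG => disjoint_singleton_left.1 (hz G hG).1.2 hw
  obtain ⟨y, hy, rfl⟩ := hH ⟨fun G hG => ⟨(hz G hG).1.1, (hz G hG).2⟩, hz0⟩
  have hlinkPart : linkPart w y ∈ redCycles 𝕜 (link D {w}) c := by
    refine ⟨fun G hG => ?_, ?_⟩
    · obtain ⟨hw, hmem, hcard⟩ := linkPart_mem_chainsOn hy w G hG
      rw [card_insert_of_notMem hw, Nat.add_right_cancel_iff] at hcard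
      exact ⟨⟨disjoint_singleton_left.2 hw, hmem⟩, hcard⟩
    · change bdryMap 𝕜 (linkPart w y) = 0
      rw [bdryMap_linkPart, neg_eq_zero]
      funext G
      simp [linkPart, hzw]
  obtain ⟨x, hx, hxy⟩ := hlink hlinkPart
  refine ⟨{G | w ∉ G}.indicator y + x, add_mem (fun G hG => ?_) ?_, ?_⟩
  · obtain ⟨hw, hne⟩ := Set.indicator_apply_ne_zero.1 hG
    exact ⟨⟨(hy G hne).1, disjoint_singleton_left.2 hw⟩, (hy G hne).2⟩
  · exact fun G hG => ⟨hD.link_subset_deletion {w} (hx G hG).1, (hx G hG).2⟩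
  · rw [map_add, hxy, ← indicator_bdryMap, Set.indicator_eq_self]
    exact fun G hG hw => hG (hzw G hw)

theorem IsMissingFace.finrank_redH_deletion_compl_ne_zero {D : Set (Finset V)} {F : Finset V}
    {c : ℕ} (hF : IsMissingFace D F) (hcard : F.card = c + 1) :
    Module.finrank 𝕜 (redH 𝕜 (deletion D Fᶜ) c) ≠ 0 := by
  rw [Ne, finrank_redH_eq_zero_iff]
  intro hle
  have hcycle : bdryMap 𝕜 (Pi.single F 1) ∈ redCycles 𝕜 (deletion D Fᶜ) c := by
    have hsingle : (Pi.single F 1 : Finset V → 𝕜) ∈ chainsOn 𝕜 {F} := fun G hG => by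
      by_contra hGF
      exact hG (Pi.single_eq_of_ne hGF 1)
    refine ⟨fun G hG => ?_, bdryMap_bdryMap _⟩
    obtain ⟨v, hv, rfl : insert v G = F⟩ := bdryMap_mem_chainsOn hsingle G hG
    rw [card_insert_of_notMem hv, Nat.add_right_cancel_iff] at hcard
    have hss : G ⊂ insert v G := ssubset_insert hv
    exact ⟨⟨hF.2 G hss, disjoint_compl_left.mono_right hss.subset⟩, hcard⟩
  obtain ⟨y, hy, hyF⟩ := hle hcycle
  have hy0 : y = 0 := by
    funext G
    by_contra hG
    obtain ⟨⟨hGD, hGF⟩, hGcard⟩ := hy G hG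
    have hGF' : G ⊆ F := by simpa using disjoint_compl_left_iff.1 hGF
    exact hF.1 (eq_of_subset_of_card_le hGF' (by omega) ▸ hGD)
  obtain ⟨v, hv⟩ : F.Nonempty := card_pos.1 (by omega)
  apply incidenceSign_ne_zero 𝕜 (F.erase v) v
  rw [← bdryMap_single_apply_erase 𝕜 hv, ← hyF, hy0, map_zero, Pi.zero_apply]

end ReducedHomology

section Leray

variable {V : Type*} [Fintype V] [LinearOrder V] (𝕜 : Type*) [Field 𝕜]

/-- `ℓ`-Leray complexes over `𝕜`, defined by the vanishing of `H̃_j` of all links for `j ≥ ℓ`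
(equivalently, of all induced subcomplexes); recall that `redH` is indexed by `c = j + 1`. -/
structure IsLeray (D : Set (Finset V)) (ℓ : ℕ) : Prop where
  isComplex : IsComplex D
  finrank_redH_link : ∀ F ∈ D, ∀ c, ℓ < c → Module.finrank 𝕜 (redH 𝕜 (link D F) c) = 0

/-- Cohen–Macaulay complexes of dimension `d` over `𝕜`, in the form of Reisner's criterion.
That `D` has dimension `d` follows by looking at the links of its facets, unless `D` is void,
which is allowed. -/
structure IsCohenMacaulay (D : Set (Finset V)) (d : ℕ) : Prop where
  isComplex : IsComplex D
  finrank_redH_link : ∀ F ∈ D, ∀ c, c + F.card ≠ d + 1 →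
    Module.finrank 𝕜 (redH 𝕜 (link D F) c) = 0

variable {𝕜} {D : Set (Finset V)} {d i ℓ : ℕ}

theorem IsLeray.deletion_singleton (hD : IsLeray 𝕜 D ℓ) (w : V) :
    IsLeray 𝕜 (deletion D {w}) ℓ where
  isComplex := isComplex_deletion hD.isComplex {w}
  finrank_redH_link F hF c hc := by
    rw [link_deletion D hF.2]
    refine finrank_redH_deletion_singleton_eq_zero (isComplex_link hD.isComplex F)
      (hD.finrank_redH_link F hF.1 c hc) ?_
    rw [link_link D hF.2.symm]
    by_cases hFw : F ∪ {w} ∈ D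
    · exact hD.finrank_redH_link _ hFw c hc
    · rw [hD.isComplex.link_eq_empty hFw]
      exact finrank_redH_empty 𝕜 c

protected theorem IsLeray.deletion (hD : IsLeray 𝕜 D ℓ) (U : Finset V) :
    IsLeray 𝕜 (deletion D U) ℓ := by
  induction U using Finset.induction_on with
  | empty => rwa [deletion_empty]
  | insert w U _ ih =>
    rw [deletion_insert]
    exact ih.deletion_singleton w

theorem IsLeray.card_le_of_isMissingFace (hD : IsLeray 𝕜 D ℓ) {F : Finset V}
    (hF : IsMissingFace D F) : F.card ≤ ℓ + 1 := by
  by_contra! hcard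
  obtain ⟨c, hc⟩ : ∃ c, F.card = c + 1 := Nat.exists_eq_add_one.2 (by omega)
  have hempty : ∅ ∈ deletion D Fᶜ :=
    ⟨hF.2 ∅ (card_pos.1 (by omega)).empty_ssubset, disjoint_empty_right _⟩
  have hzero := (hD.deletion Fᶜ).finrank_redH_link ∅ hempty c (by omega)
  rw [link_empty] at hzero
  exact hF.finrank_redH_deletion_compl_ne_zero hc hzero

theorem IsCohenMacaulay.isLeray (hD : IsCohenMacaulay 𝕜 D d) (hi : d ≤ 2 * i + 1)
    (hbdry : ∀ F ∈ D, F.card ≤ i + 1 → F ∈ bdryFaces 𝕜 D d) : IsLeray 𝕜 D i where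
  isComplex := hD.isComplex
  finrank_redH_link F hF c hc := by
    by_cases htop : c + F.card = d + 1
    · have hlink := (hbdry F hF (by omega)).2
      rwa [Nat.sub_eq_of_eq_add htop.symm] at hlink
    · exact hD.finrank_redH_link F hF c htop

end Leray

theorem stacked_ball_unique_general {V : Type*} [Fintype V] [LinearOrder V] {𝕜 : Type*} [Field 𝕜]
    {D : Set (Finset V)} {d i : ℕ} (hD : IsCohenMacaulay 𝕜 D d) (hi : d ≤ 2 * i + 1)
    (hbdry : ∀ F ∈ D, F.card ≤ i + 1 → F ∈ bdryFaces 𝕜 D d) :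
    D = skc (bdryFaces 𝕜 D d) i := by
  have hskc : skc D i = D := hD.isComplex.skc_eq_self fun _ =>
    (hD.isLeray hi hbdry).card_le_of_isMissingFace
  have hskel : skel D i = skel (bdryFaces 𝕜 D d) i :=
    Set.Subset.antisymm (fun F hF => ⟨hbdry F hF.1 hF.2, hF.2⟩) fun F hF => ⟨hF.1.1, hF.2⟩
  exact hskc.symm.trans (skc_eq_skc_of_skel_eq hskel)

/-- Let `Δ` be a homology `(d-1)`-sphere over a field `𝕜`
and `1 ≤ r ≤ (d+1)/2`. If `Δ'` is an `(r-1)`-stacked homology `d`-ball over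
`𝕜` with `∂Δ' = Δ`, then `Δ' = Δ(d-r)`. (In particular, an `(r-1)`-stacked
homology `d`-ball with boundary `Δ` is unique.) -/
theorem stacked_ball_unique
    {V : Type*} [Fintype V] [LinearOrder V] (𝕜 : Type*) [Field 𝕜]
    (Δ Δ' : Set (Finset V)) (d r : ℕ)
    (hr1 : 1 ≤ r) (hr2 : 2 * r ≤ d + 1)
    (hsphere : IsHomologySphere 𝕜 Δ (d - 1))
    (hstacked : IsStackedBall 𝕜 Δ' d r)
    (hbdry : bdryFaces 𝕜 Δ' d = Δ) :
    Δ' = skc Δ (d - r) := by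
  obtain ⟨⟨hD, -, -, hlink, -⟩, hinterior⟩ := hstacked
  rw [← hbdry]
  refine stacked_ball_unique_general ⟨hD, fun F hF c => (hlink F hF c).2⟩ (by omega)
    fun F hF hcard => by_contra fun hF' => ?_
  exact absurd (hinterior F hF hF') (by omega)
end

section
/- Let Δ be the boundary complex of a simplicial d-polytope P with vertex set V ⊂ ℝ^d, let 1 ≤ r ≤ d/2, and suppose h_{r−1}(P) = h_r(P) (so that Δ(r−1) = Δ(d−r) and Δ(r−1) is pure of dimension d by Cohen–Macaulayness). Then for any two faces F_1, F_2 of Δ' := Δ(r−1), the convex hulls satisfy conv(F_1) ∩ conv(F_2) = conv(F_1 ∩ F_2), and every face F of Δ' spans a simplex of dimension #F − 1; i.e., taking convex hulls of faces of Δ' yields a geometric realization of Δ'. -/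
open Finset

variable {V : Type*} [DecidableEq V] [Fintype V]

/- ### Polytopes and boundary complexes -/

section Polytope

variable {V : Type*} [Fintype V] [DecidableEq V] {d : ℕ}

/-- `Δ` is the boundary complex of the polytope `conv(pos(V)) ⊆ ℝ^d` with
vertex images `pos v`: the faces of `Δ` are exactly the vertex sets of the
proper faces of the polytope, i.e. the sets of vertices lying on a
supporting hyperplane. -/
def IsBoundaryComplexOf (pos : V → EuclideanSpace ℝ (Fin d))
    (Δ : Set (Finset V)) : Prop :=
  ∀ F : Finset V, F ∈ Δ ↔
    ∃ (ℓ : EuclideanSpace ℝ (Fin d) →ₗ[ℝ] ℝ) (c : ℝ),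
      (∀ v, ℓ (pos v) ≤ c) ∧ (∀ v, ℓ (pos v) = c ↔ v ∈ F) ∧ (∃ v, ℓ (pos v) < c)

/-- `pos` and `Δ` describe a simplicial `d`-polytope `P = conv(pos(V)) ⊆ ℝ^d`
with boundary complex `Δ`: the points `pos v` are in convex position and
affinely span `ℝ^d` (so `P` is full dimensional with vertex set `pos(V)`),
`Δ` is the boundary complex of `P`, and every proper face of `P` is a
simplex. -/
def IsSimplicialPolytope (pos : V → EuclideanSpace ℝ (Fin d))
    (Δ : Set (Finset V)) : Prop :=
  IsBoundaryComplexOf pos Δ ∧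
  affineSpan ℝ (Set.range pos) = ⊤ ∧
  (∀ v : V, pos v ∉ convexHull ℝ (pos '' {u | u ≠ v})) ∧
  (∀ F ∈ Δ, AffineIndependent ℝ (fun x : {x // x ∈ F} => pos x))

end Polytope

/-!
Two disjoint faces `F`, `G` of `Δ(i)`, where `d < 2 * (i + 1)`, have disjoint convex hulls. Indeed,
if the hulls meet then so do those of some `A ⊆ F` and `B ⊆ G` with `#A + #B ≤ d + 2`: this is
Carathéodory's theorem in `ℝ^d × ℝ`, applied to the origin and to the points `(x, 1)` for `x` a
vertex of `F` and `-(y, 1)` for `y` a vertex of `G`. One of `A`, `B` has at most `i + 1` elements,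
hence is a face of the polytope, and a supporting hyperplane separates it from the other.

Radon's theorem turns this disjointness into affine independence of every face. As for the
intersections, a point with two different convex representations, on `F₁` and on `F₂`, gives an
affine dependence whose positive part lies in `F₁` and whose negative part lies in `F₂`; these parts
are disjoint faces with intersecting hulls.
-/

theorem sum_filter_neg_add_sum_filter_pos {ι α M : Type*} [LinearOrder α] [Zero α]
    [AddCommMonoid M] {s : Finset ι} {w : ι → α} {g : ι → M}
    (hg : ∀ i ∈ s, w i = 0 → g i = 0) :
    ∑ i ∈ s with w i < 0, g i + ∑ i ∈ s with 0 < w i, g i = ∑ i ∈ s, g i := by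
  rw [sum_filter, sum_filter, ← sum_add_distrib]
  refine sum_congr rfl fun i hi ↦ ?_
  rcases lt_trichotomy (w i) 0 with hneg | hzero | hpos
  · simp [hneg, hneg.not_gt]
  · simp [hzero, hg i hi hzero]
  · simp [hpos, hpos.not_gt]

section ConvexHull

variable {𝕜 E ι : Type*} [Field 𝕜] [LinearOrder 𝕜] [IsStrictOrderedRing 𝕜]
  [AddCommGroup E] [Module 𝕜 E]

/-- The set `s × {1} ∪ -(t × {1})`: the homogenizations of `s` and of `t`, the latter negated. It
turns the common points of two convex hulls into a membership of the origin in a single one. -/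
def signedLift (𝕜 : Type*) [AddGroupWithOne 𝕜] {E : Type*} [AddGroup E] (s t : Set E) :
    Set (E × 𝕜) :=
  s ×ˢ {1} ∪ -(t ×ˢ {1})

theorem zero_mem_convexHull_signedLift_iff {s t : Set E} :
    (0 : E × 𝕜) ∈ convexHull 𝕜 (signedLift 𝕜 s t) ↔
      (convexHull 𝕜 s ∩ convexHull 𝕜 t).Nonempty := by
  rw [signedLift]
  rcases s.eq_empty_or_nonempty with rfl | hs
  · simp [convexHull_neg, convexHull_prod]
  rcases t.eq_empty_or_nonempty with rfl | ht
  · simp [convexHull_prod]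
  rw [convexHull_union (hs.prod (Set.singleton_nonempty 1))
      (ht.prod (Set.singleton_nonempty 1)).neg,
    convexHull_neg, convexHull_prod, convexHull_prod, convexHull_singleton, mem_convexJoin]
  constructor
  · rintro ⟨⟨x, _⟩, ⟨hx, rfl⟩, ⟨y, c⟩, ⟨hy, hc⟩, a, b, -, -, hab, h⟩
    obtain rfl : c = -1 := neg_eq_iff_eq_neg.1 hc
    obtain ⟨hxy, hab'⟩ : a • x + b • y = 0 ∧ a - b = 0 := by simpa [sub_eq_add_neg] using h
    obtain rfl : a = b := sub_eq_zero.1 hab'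
    have ha : a ≠ 0 := by rintro rfl; simp at hab
    have hxy' : x = -y := by
      rw [← smul_add, smul_eq_zero_iff_right ha] at hxy
      exact eq_neg_of_add_eq_zero_left hxy
    exact ⟨x, hx, hxy' ▸ hy⟩
  · rintro ⟨x, hx, hx'⟩
    refine ⟨(x, 1), ⟨hx, rfl⟩, -(x, 1), by simpa using hx', 1 / 2, 1 / 2, ?_⟩
    norm_num

theorem exists_finset_card_add_card_le_of_convexHull_inter_nonempty [FiniteDimensional 𝕜 E]
    {s t : Set E} (h : (convexHull 𝕜 s ∩ convexHull 𝕜 t).Nonempty) :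
    ∃ s' t' : Finset E, ↑s' ⊆ s ∧ ↑t' ⊆ t ∧ #s' + #t' ≤ Module.finrank 𝕜 E + 2 ∧
      (convexHull 𝕜 (s' : Set E) ∩ convexHull 𝕜 (t' : Set E)).Nonempty := by
  classical
  rw [← zero_mem_convexHull_signedLift_iff, convexHull_eq_union] at h
  simp only [Set.mem_iUnion] at h
  obtain ⟨T, hT, hind, h0⟩ := h
  have hTcard : #T ≤ Module.finrank 𝕜 E + 2 := by
    have := hind.card_le_finrank_succ.trans
      (Nat.add_le_add_right (Submodule.finrank_le _) 1)
    simpa using this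
  have hone : (1 : 𝕜) ≠ -1 := fun h ↦ by linarith
  refine ⟨{p ∈ T | p.2 = 1}.image Prod.fst, {p ∈ T | p.2 ≠ 1}.image (fun p ↦ -p.1),
    ?_, ?_, ?_, zero_mem_convexHull_signedLift_iff.1 (convexHull_mono ?_ h0)⟩
  · intro x hx
    obtain ⟨p, hp, rfl⟩ := mem_image.1 (mem_coe.1 hx)
    obtain ⟨hpT, hp1⟩ := mem_filter.1 hp
    rcases hT hpT with hps | hpt
    · exact hps.1
    · exact absurd (hp1.symm.trans (neg_eq_iff_eq_neg.1 hpt.2)) hone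
  · intro x hx
    obtain ⟨p, hp, rfl⟩ := mem_image.1 (mem_coe.1 hx)
    obtain ⟨hpT, hp1⟩ := mem_filter.1 hp
    rcases hT hpT with hps | hpt
    · exact absurd hps.2 hp1
    · exact hpt.1
  · calc _ ≤ #{p ∈ T | p.2 = 1} + #{p ∈ T | p.2 ≠ 1} := add_le_add card_image_le card_image_le
      _ = #T := card_filter_add_card_filter_not _
      _ ≤ _ := hTcard
  · intro p hp
    by_cases hp1 : p.2 = 1
    · exact .inl ⟨mem_coe.2 (mem_image_of_mem _ (mem_filter.2 ⟨hp, hp1⟩)), hp1⟩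
    · have hpt := (hT hp).resolve_left fun hps ↦ hp1 hps.2
      exact .inr ⟨mem_coe.2 (mem_image_of_mem _ (mem_filter.2 ⟨hp, hp1⟩)), hpt.2⟩

theorem exists_subset_card_add_card_le_of_convexHull_image_inter_nonempty [FiniteDimensional 𝕜 E]
    (f : ι → E) {s t : Set ι}
    (h : (convexHull 𝕜 (f '' s) ∩ convexHull 𝕜 (f '' t)).Nonempty) :
    ∃ s' t' : Finset ι, ↑s' ⊆ s ∧ ↑t' ⊆ t ∧ #s' + #t' ≤ Module.finrank 𝕜 E + 2 ∧
      (convexHull 𝕜 (f '' s') ∩ convexHull 𝕜 (f '' t')).Nonempty := by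
  classical
  obtain ⟨u, v, hu, hv, hcard, hne⟩ :=
    exists_finset_card_add_card_le_of_convexHull_inter_nonempty h
  obtain ⟨s', hs', hinj, rfl⟩ := exists_subset_injOn_image_eq_of_surjOn s u hu
  obtain ⟨t', ht', hinj', rfl⟩ := exists_subset_injOn_image_eq_of_surjOn t v hv
  rw [card_image_of_injOn hinj, card_image_of_injOn hinj'] at hcard
  rw [coe_image, coe_image] at hne
  exact ⟨s', t', hs', ht', hcard, hne⟩

theorem mem_convexHull_image_finset_iff (f : ι → E) {s : Finset ι} {x : E} :
    x ∈ convexHull 𝕜 (f '' s) ↔ ∃ w : ι → 𝕜, (∀ i, 0 ≤ w i) ∧ (∀ i ∉ s, w i = 0) ∧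
      ∑ i ∈ s, w i = 1 ∧ ∑ i ∈ s, w i • f i = x := by
  classical
  constructor
  · intro hx
    obtain ⟨u, hus, hinj, himage⟩ :=
      exists_subset_injOn_image_eq_of_surjOn (f := f) (s : Set ι) (s.image f)
        (by simpa using Set.surjOn_image f s)
    rw [← coe_image, ← himage, mem_convexHull'] at hx
    obtain ⟨w, hw, hsum, hcomb⟩ := hx
    rw [sum_image hinj] at hsum hcomb
    have hus : u ⊆ s := mod_cast hus
    refine ⟨fun i ↦ if i ∈ u then w (f i) else 0, fun i ↦ ?_, fun i hi ↦ ?_, ?_, ?_⟩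
    · dsimp only
      split_ifs with hi
      · exact hw _ (mem_image_of_mem f hi)
      · exact le_rfl
    · exact if_neg fun hiu ↦ hi (hus hiu)
    · simpa [sum_ite_mem, inter_eq_right.2 hus] using hsum
    · simpa [ite_smul, sum_ite_mem, inter_eq_right.2 hus] using hcomb
  · rintro ⟨w, hw, -, hsum, rfl⟩
    exact (convex_convexHull 𝕜 _).sum_mem (fun i _ ↦ hw i) hsum
      fun i hi ↦ subset_convexHull 𝕜 _ (Set.mem_image_of_mem f hi)

theorem convexHull_image_pos_inter_convexHull_image_neg_nonempty (f : ι → E) {s : Finset ι}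
    {w : ι → 𝕜} (hw : ∑ i ∈ s, w i = 0) (hwf : ∑ i ∈ s, w i • f i = 0) (hne : ∃ i ∈ s, w i ≠ 0) :
    (convexHull 𝕜 (f '' ({i ∈ s | 0 < w i} : Finset ι)) ∩
      convexHull 𝕜 (f '' ({i ∈ s | w i < 0} : Finset ι))).Nonempty := by
  have hsum : ∑ i ∈ s with w i < 0, w i + ∑ i ∈ s with 0 < w i, w i = 0 := by
    rw [sum_filter_neg_add_sum_filter_pos fun _ _ ↦ id, hw]
  have hcomb : ∑ i ∈ s with w i < 0, w i • f i + ∑ i ∈ s with 0 < w i, w i • f i = 0 := by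
    rw [sum_filter_neg_add_sum_filter_pos fun i _ hi ↦ by rw [hi, zero_smul], hwf]
  have hpos : 0 < ∑ i ∈ s with 0 < w i, w i := by
    obtain ⟨i, hi, hwi⟩ := exists_pos_of_sum_zero_of_exists_nonzero w hw hne
    exact sum_pos (fun i hi ↦ (mem_filter.1 hi).2) ⟨i, mem_filter.2 ⟨hi, hwi⟩⟩
  have hneg : ∑ i ∈ s with w i < 0, w i < 0 := by linarith
  refine ⟨centerMass {i ∈ s | 0 < w i} w f, ?_, ?_⟩
  · exact centerMass_mem_convexHull _ (fun i hi ↦ (mem_filter.1 hi).2.le) hpos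
      fun i hi ↦ Set.mem_image_of_mem f hi
  · rw [← centerMass_of_sum_add_sum_eq_zero hsum hcomb]
    exact centerMass_mem_convexHull_of_nonpos _ (fun i hi ↦ (mem_filter.1 hi).2.le) hneg
      fun i hi ↦ Set.mem_image_of_mem f hi

theorem weights_eq_of_disjoint_convexHull_image (f : ι → E) {s t : Finset ι}
    (h : ∀ A ⊆ s, ∀ B ⊆ t, Disjoint A B →
      Disjoint (convexHull 𝕜 (f '' A)) (convexHull 𝕜 (f '' B)))
    {a b : ι → 𝕜} (ha : ∀ i, 0 ≤ a i) (hb : ∀ i, 0 ≤ b i)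
    (has : ∀ i ∉ s, a i = 0) (hbt : ∀ i ∉ t, b i = 0)
    (hsum : ∑ i ∈ s, a i = ∑ i ∈ t, b i)
    (hcomb : ∑ i ∈ s, a i • f i = ∑ i ∈ t, b i • f i) : a = b := by
  classical
  have hsum' : ∑ i ∈ s ∪ t, (a i - b i) = 0 := by
    rw [sum_sub_distrib, ← sum_subset subset_union_left fun i _ ↦ has i, hsum,
      ← sum_subset subset_union_right fun i _ ↦ hbt i, sub_self]
  have hcomb' : ∑ i ∈ s ∪ t, (a i - b i) • f i = 0 := by
    simp only [sub_smul]
    rw [sum_sub_distrib,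
      ← sum_subset subset_union_left fun i _ hi ↦ by rw [has i hi, zero_smul], hcomb,
      ← sum_subset subset_union_right fun i _ hi ↦ by rw [hbt i hi, zero_smul], sub_self]
  have hpos : {i ∈ s ∪ t | 0 < a i - b i} ⊆ s := by
    intro i hi
    by_contra his
    linarith [(mem_filter.1 hi).2, has i his, hb i]
  have hneg : {i ∈ s ∪ t | a i - b i < 0} ⊆ t := by
    intro i hi
    by_contra hit
    linarith [(mem_filter.1 hi).2, hbt i hit, ha i]
  have hzero : ∀ i ∈ s ∪ t, a i - b i = 0 := by
    by_contra! hne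
    exact Set.not_disjoint_iff_nonempty_inter.2
      (convexHull_image_pos_inter_convexHull_image_neg_nonempty f hsum' hcomb' hne)
      (h _ hpos _ hneg (disjoint_filter.2 fun i _ ↦ lt_asymm))
  funext i
  by_cases hi : i ∈ s ∪ t
  · exact sub_eq_zero.1 (hzero i hi)
  · rw [notMem_union] at hi
    rw [has i hi.1, hbt i hi.2]

theorem convexHull_image_inter_eq_of_disjoint [DecidableEq ι] (f : ι → E) {s t : Finset ι}
    (h : ∀ A ⊆ s, ∀ B ⊆ t, Disjoint A B →
      Disjoint (convexHull 𝕜 (f '' A)) (convexHull 𝕜 (f '' B))) :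
    convexHull 𝕜 (f '' s) ∩ convexHull 𝕜 (f '' t) = convexHull 𝕜 (f '' ↑(s ∩ t)) := by
  refine Set.Subset.antisymm ?_ (Set.subset_inter (by gcongr; exact inter_subset_left)
    (by gcongr; exact inter_subset_right))
  rintro x ⟨hxs, hxt⟩
  obtain ⟨a, ha, has, hasum, hax⟩ := (mem_convexHull_image_finset_iff f).1 hxs
  obtain ⟨b, hb, hbt, hbsum, hbx⟩ := (mem_convexHull_image_finset_iff f).1 hxt
  obtain rfl : a = b := weights_eq_of_disjoint_convexHull_image f h ha hb has hbt
    (hasum.trans hbsum.symm) (hax.trans hbx.symm)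
  have hzero : ∀ i ∉ s ∩ t, a i = 0 := fun i hi ↦ by
    rw [mem_inter, not_and_or] at hi
    exact hi.elim (has i) (hbt i)
  refine (mem_convexHull_image_finset_iff f).2 ⟨a, ha, hzero, ?_, ?_⟩
  · rwa [sum_subset inter_subset_left fun i _ ↦ hzero i]
  · rwa [sum_subset inter_subset_left fun i _ hi ↦ by rw [hzero i hi, zero_smul]]

theorem affineIndependent_of_disjoint_convexHull_image (f : ι → E) {s : Finset ι}
    (h : ∀ A ⊆ s, ∀ B ⊆ s, Disjoint A B →
      Disjoint (convexHull 𝕜 (f '' A)) (convexHull 𝕜 (f '' B))) :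
    AffineIndependent 𝕜 (fun i : {i // i ∈ s} ↦ f i) := by
  classical
  by_contra hdep
  obtain ⟨I, hI⟩ := Convex.radon_partition hdep
  refine Set.not_disjoint_iff_nonempty_inter.2 hI ?_
  have hIc : Disjoint (I.toFinset.map (.subtype (· ∈ s))) (Iᶜ.toFinset.map (.subtype (· ∈ s))) := by
    simpa using disjoint_compl_right
  simpa [Set.image_image] using h _ (map_subtype_subset _) _ (map_subtype_subset _) hIc

end ConvexHull

section Realization

variable {V : Type*} {Δ : Set (Finset V)} {d i : ℕ} {pos : V → EuclideanSpace ℝ (Fin d)}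

theorem isComplex_skc (Δ : Set (Finset V)) (i : ℕ) : IsComplex (skc Δ i) :=
  fun _ hF _ hGF _ hHG ↦ hF _ (hHG.trans hGF)

theorem IsBoundaryComplexOf.disjoint_convexHull (hΔ : IsBoundaryComplexOf pos Δ) {F G : Finset V}
    (hF : F ∈ Δ) (hFG : Disjoint F G) :
    Disjoint (convexHull ℝ (pos '' F)) (convexHull ℝ (pos '' G)) := by
  obtain ⟨ℓ, c, hle, heq, -⟩ := (hΔ F).1 hF
  have hFc : convexHull ℝ (pos '' F) ⊆ {x | c ≤ ℓ x} := by
    refine convexHull_min ?_ (convex_halfSpace_ge ℓ.isLinear c)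
    rintro _ ⟨v, hv, rfl⟩
    exact ((heq v).2 hv).ge
  have hGc : convexHull ℝ (pos '' G) ⊆ {x | ℓ x < c} := by
    refine convexHull_min ?_ (convex_halfSpace_lt ℓ.isLinear c)
    rintro _ ⟨v, hv, rfl⟩
    exact (hle v).lt_of_ne fun hvc ↦ disjoint_right.1 hFG hv ((heq v).1 hvc)
  exact Set.disjoint_left.2 fun x hxF hxG ↦ (show ℓ x < c from hGc hxG).not_ge (hFc hxF)

theorem IsBoundaryComplexOf.disjoint_convexHull_of_mem_skc (hΔ : IsBoundaryComplexOf pos Δ)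
    (hi : d < 2 * (i + 1)) {F G : Finset V} (hF : F ∈ skc Δ i) (hG : G ∈ skc Δ i)
    (hFG : Disjoint F G) :
    Disjoint (convexHull ℝ (pos '' F)) (convexHull ℝ (pos '' G)) := by
  by_contra hmeet
  obtain ⟨A, B, hAF, hBG, hcard, hAB⟩ :=
    exists_subset_card_add_card_le_of_convexHull_image_inter_nonempty (𝕜 := ℝ) pos
      (Set.not_disjoint_iff_nonempty_inter.1 hmeet)
  rw [finrank_euclideanSpace_fin] at hcard
  have hdisj : Disjoint A B := hFG.mono (mod_cast hAF) (mod_cast hBG)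
  apply Set.not_disjoint_iff_nonempty_inter.2 hAB
  obtain hA | hB : #A ≤ i + 1 ∨ #B ≤ i + 1 := by omega
  · exact hΔ.disjoint_convexHull (hF A (mod_cast hAF) hA) hdisj
  · exact (hΔ.disjoint_convexHull (hG B (mod_cast hBG) hB) hdisj.symm).symm

end Realization

theorem skc_geometric_realization_general {V : Type*} [DecidableEq V] {d i : ℕ}
    (pos : V → EuclideanSpace ℝ (Fin d)) (Δ : Set (Finset V))
    (hΔ : IsBoundaryComplexOf pos Δ)
    (hi : d < 2 * (i + 1)) :
    (∀ F₁ ∈ skc Δ i, ∀ F₂ ∈ skc Δ i,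
      convexHull ℝ (pos '' F₁) ∩ convexHull ℝ (pos '' F₂) = convexHull ℝ (pos '' ↑(F₁ ∩ F₂))) ∧
    (∀ F ∈ skc Δ i, AffineIndependent ℝ (fun x : {x // x ∈ F} ↦ pos x)) := by
  have hdisj {F₁ F₂ : Finset V} (hF₁ : F₁ ∈ skc Δ i) (hF₂ : F₂ ∈ skc Δ i) (A : Finset V)
      (hA : A ⊆ F₁) (B : Finset V) (hB : B ⊆ F₂) (hAB : Disjoint A B) :
      Disjoint (convexHull ℝ (pos '' A)) (convexHull ℝ (pos '' B)) :=
    hΔ.disjoint_convexHull_of_mem_skc hi (isComplex_skc Δ i _ hF₁ _ hA)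
      (isComplex_skc Δ i _ hF₂ _ hB) hAB
  exact ⟨fun F₁ hF₁ F₂ hF₂ ↦ convexHull_image_inter_eq_of_disjoint pos (hdisj hF₁ hF₂),
    fun F hF ↦ affineIndependent_of_disjoint_convexHull_image pos (hdisj hF hF)⟩

/-- Let `Δ` be the boundary complex of a simplicial
`d`-polytope `P` with vertices `pos v ∈ ℝ^d`, let `1 ≤ r ≤ d/2`, and suppose
`h_{r-1}(P) = h_r(P)` (so that, as may be assumed, `Δ(r-1) = Δ(d-r)` and
`Δ' := Δ(r-1)` is pure of dimension `d`). Then for any two faces `F₁, F₂`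
of `Δ'` one has `conv(F₁) ∩ conv(F₂) = conv(F₁ ∩ F₂)`, and every face `F`
of `Δ'` spans a simplex of dimension `#F - 1` (its vertices are affinely
independent); i.e., taking convex hulls of the faces of `Δ'` yields a
geometric realization of `Δ'`. -/
theorem skc_geometric_realization
    {V : Type*} [Fintype V] [DecidableEq V] {d : ℕ} (r : ℕ)
    (hr1 : 1 ≤ r) (hr2 : 2 * r ≤ d)
    (pos : V → EuclideanSpace ℝ (Fin d)) (Δ : Set (Finset V))
    (hpoly : IsSimplicialPolytope pos Δ)
    (hh : hVec Δ d (r - 1) = hVec Δ d r)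
    (heq : skc Δ (r - 1) = skc Δ (d - r))
    (hdim : ∀ F ∈ skc Δ (r - 1), F.card ≤ d + 1)
    (hpure : ∀ F ∈ skc Δ (r - 1), ∃ G ∈ skc Δ (r - 1), F ⊆ G ∧ G.card = d + 1) :
    (∀ F₁ ∈ skc Δ (r - 1), ∀ F₂ ∈ skc Δ (r - 1),
      convexHull ℝ (pos '' ↑F₁) ∩ convexHull ℝ (pos '' ↑F₂)
        = convexHull ℝ (pos '' ↑(F₁ ∩ F₂))) ∧
    (∀ F ∈ skc Δ (r - 1),
      AffineIndependent ℝ (fun x : {x // x ∈ F} => pos x)) := by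
  rw [heq]
  exact skc_geometric_realization_general pos Δ hpoly.1 (by omega)
end
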